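/- Define the 24 vectors in ℝ^4: 1=(0,0,0,1), 2=(0,0,1,0), 3=(0,0,1,1), 4=(0,0,1,-1), 5=(0,1,0,0), 6=(0,1,0,1), 7=(0,1,0,-1), 8=(0,1,1,0), B=(0,1,-1,0), E=(1,0,0,0), F=(1,0,0,1), G=(1,0,0,-1), H=(1,0,1,0), K=(1,0,-1,0), N=(1,1,0,0), R=(1,1,1,1), S=(1,1,1,-1), U=(1,1,-1,1), V=(1,1,-1,-1), W=(1,-1,0,0), a=(1,-1,1,1), b=(1,-1,1,-1), d=(1,-1,-1,1), e=(-1,1,1,1). There is no function f from these 24 vectors to {0,1} such that (i) no two of the vectors that are orthogonal (with respect to the standard inner product on ℝ^4) are both assigned 1, and (ii) each of the 24 quadruples 125E, 12NW, 15HK, 18BE, 25FG, 267E, 345E, 34NW, 3Nbd, 3SUW, 4Nae, 4RVW, 67HK, 6HVd, 6KSa, 7HUe, 7KRb, 8BFG, 8FVb, 8GUa, BFSe, BGRd, RVbd, SUae contains at least one vector assigned 1. That is, the Peres 24-vector set is a Kochen-Specker set in ℝ^4. -/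

import Mathlib

def dot4 (u v : Fin 4 → ℝ) : ℝ := ∑ i, u i * v i

noncomputable def v1 : Fin 4 → ℝ := ![0, 0, 0, 1]
noncomputable def v2 : Fin 4 → ℝ := ![0, 0, 1, 0]
noncomputable def v3 : Fin 4 → ℝ := ![0, 0, 1, 1]
noncomputable def v4 : Fin 4 → ℝ := ![0, 0, 1, (-1)]
noncomputable def v5 : Fin 4 → ℝ := ![0, 1, 0, 0]
noncomputable def v6 : Fin 4 → ℝ := ![0, 1, 0, 1]
noncomputable def v7 : Fin 4 → ℝ := ![0, 1, 0, (-1)]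
noncomputable def v8 : Fin 4 → ℝ := ![0, 1, 1, 0]
noncomputable def vB : Fin 4 → ℝ := ![0, 1, (-1), 0]
noncomputable def vE : Fin 4 → ℝ := ![1, 0, 0, 0]
noncomputable def vF : Fin 4 → ℝ := ![1, 0, 0, 1]
noncomputable def vG : Fin 4 → ℝ := ![1, 0, 0, (-1)]
noncomputable def vH : Fin 4 → ℝ := ![1, 0, 1, 0]
noncomputable def vK : Fin 4 → ℝ := ![1, 0, (-1), 0]
noncomputable def vN : Fin 4 → ℝ := ![1, 1, 0, 0]
noncomputable def vR : Fin 4 → ℝ := ![1, 1, 1, 1]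
noncomputable def vS : Fin 4 → ℝ := ![1, 1, 1, (-1)]
noncomputable def vU : Fin 4 → ℝ := ![1, 1, (-1), 1]
noncomputable def vV : Fin 4 → ℝ := ![1, 1, (-1), (-1)]
noncomputable def vW : Fin 4 → ℝ := ![1, (-1), 0, 0]
noncomputable def va : Fin 4 → ℝ := ![1, (-1), 1, 1]
noncomputable def vb : Fin 4 → ℝ := ![1, (-1), 1, (-1)]
noncomputable def vd : Fin 4 → ℝ := ![1, (-1), (-1), 1]
noncomputable def ve : Fin 4 → ℝ := ![(-1), 1, 1, 1]

noncomputable def allVecs : List (Fin 4 → ℝ) :=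
  [v1, v2, v3, v4, v5, v6, v7, v8, vB, vE, vF, vG, vH, vK, vN, vR, vS, vU, vV, vW, va, vb, vd, ve]

noncomputable def tuples : List (List (Fin 4 → ℝ)) :=
  [[v1, v2, v5, vE],
   [v1, v2, vN, vW],
   [v1, v5, vH, vK],
   [v1, v8, vB, vE],
   [v2, v5, vF, vG],
   [v2, v6, v7, vE],
   [v3, v4, v5, vE],
   [v3, v4, vN, vW],
   [v3, vN, vb, vd],
   [v3, vS, vU, vW],
   [v4, vN, va, ve],
   [v4, vR, vV, vW],
   [v6, v7, vH, vK],
   [v6, vH, vV, vd],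
   [v6, vK, vS, va],
   [v7, vH, vU, ve],
   [v7, vK, vR, vb],
   [v8, vB, vF, vG],
   [v8, vF, vV, vb],
   [v8, vG, vU, va],
   [vB, vF, vS, ve],
   [vB, vG, vR, vd],
   [vR, vV, vb, vd],
   [vS, vU, va, ve]]

/-- In a listed quadruple of nonzero mutually orthogonal vectors, an odd number is assigned 1. -/
theorem quad_xor (f : (Fin 4 → ℝ) → Bool)
    (h : ∀ u ∈ allVecs, ∀ v ∈ allVecs, u ≠ v → dot4 u v = 0 → ¬ (f u = true ∧ f v = true))
    (ht : ∀ t ∈ tuples, ∃ v ∈ t, f v = true)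
    (a b c d : Fin 4 → ℝ) (hm : [a, b, c, d] ∈ tuples)
    (ha : a ∈ allVecs) (hb : b ∈ allVecs) (hc : c ∈ allVecs) (hd : d ∈ allVecs)
    (ho : (dot4 a a ≠ 0 ∧ dot4 b b ≠ 0 ∧ dot4 c c ≠ 0) ∧ dot4 a b = 0 ∧ dot4 a c = 0 ∧
      dot4 a d = 0 ∧ dot4 b c = 0 ∧ dot4 b d = 0 ∧ dot4 c d = 0) :
    (f a ^^ f b ^^ f c ^^ f d) = true := by
  have key : ∀ u ∈ allVecs, ∀ v ∈ allVecs, dot4 u u ≠ 0 → dot4 u v = 0 →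
      ¬ (f u = true ∧ f v = true) := by
    intro u hu v hv h1 h2
    refine h u hu v hv ?_ h2
    rintro rfl
    exact h1 h2
  obtain ⟨⟨na, nb, nc⟩, ab, ac, ad, bc, bd, cd⟩ := ho
  have h1 := key a ha b hb na ab
  have h2 := key a ha c hc na ac
  have h3 := key a ha d hd na ad
  have h4 := key b hb c hc nb bc
  have h5 := key b hb d hd nb bd
  have h6 := key c hc d hd nc cd
  have h7 := ht _ hm
  simp only [List.mem_cons, List.not_mem_nil, or_false, exists_eq_or_imp, exists_eq_left] at h7
  revert h1 h2 h3 h4 h5 h6 h7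
  generalize f a = p
  generalize f b = q
  generalize f c = r
  generalize f d = s
  revert p q r s
  intro p q r s
  cases p <;> cases q <;> cases r <;> cases s <;> simp

theorem peres24_vector_KS :
    ¬ ∃ f : (Fin 4 → ℝ) → Bool,
      (∀ u ∈ allVecs, ∀ v ∈ allVecs, u ≠ v → dot4 u v = 0 →
        ¬ (f u = true ∧ f v = true)) ∧
      (∀ t ∈ tuples, ∃ v ∈ t, f v = true) := by
  rintro ⟨f, h, ht⟩
  have h12NW := quad_xor f h ht v1 v2 vN vW (by simp [tuples])
    (by simp [allVecs]) (by simp [allVecs]) (by simp [allVecs]) (by simp [allVecs])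
    (by norm_num [dot4, Fin.sum_univ_succ, v1, v2, vN, vW])
  have h15HK := quad_xor f h ht v1 v5 vH vK (by simp [tuples])
    (by simp [allVecs]) (by simp [allVecs]) (by simp [allVecs]) (by simp [allVecs])
    (by norm_num [dot4, Fin.sum_univ_succ, v1, v5, vH, vK])
  have h25FG := quad_xor f h ht v2 v5 vF vG (by simp [tuples])
    (by simp [allVecs]) (by simp [allVecs]) (by simp [allVecs]) (by simp [allVecs])
    (by norm_num [dot4, Fin.sum_univ_succ, v2, v5, vF, vG])
  have h3Nbd := quad_xor f h ht v3 vN vb vd (by simp [tuples])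
    (by simp [allVecs]) (by simp [allVecs]) (by simp [allVecs]) (by simp [allVecs])
    (by norm_num [dot4, Fin.sum_univ_succ, v3, vN, vb, vd])
  have h3SUW := quad_xor f h ht v3 vS vU vW (by simp [tuples])
    (by simp [allVecs]) (by simp [allVecs]) (by simp [allVecs]) (by simp [allVecs])
    (by norm_num [dot4, Fin.sum_univ_succ, v3, vS, vU, vW])
  have h6HVd := quad_xor f h ht v6 vH vV vd (by simp [tuples])
    (by simp [allVecs]) (by simp [allVecs]) (by simp [allVecs]) (by simp [allVecs])
    (by norm_num [dot4, Fin.sum_univ_succ, v6, vH, vV, vd])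
  have h6KSa := quad_xor f h ht v6 vK vS va (by simp [tuples])
    (by simp [allVecs]) (by simp [allVecs]) (by simp [allVecs]) (by simp [allVecs])
    (by norm_num [dot4, Fin.sum_univ_succ, v6, vK, vS, va])
  have h8FVb := quad_xor f h ht v8 vF vV vb (by simp [tuples])
    (by simp [allVecs]) (by simp [allVecs]) (by simp [allVecs]) (by simp [allVecs])
    (by norm_num [dot4, Fin.sum_univ_succ, v8, vF, vV, vb])
  have h8GUa := quad_xor f h ht v8 vG vU va (by simp [tuples])
    (by simp [allVecs]) (by simp [allVecs]) (by simp [allVecs]) (by simp [allVecs])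
    (by norm_num [dot4, Fin.sum_univ_succ, v8, vG, vU, va])
  have hx := congrArg₂ xor h12NW h15HK
  replace hx := congrArg₂ xor hx h25FG
  replace hx := congrArg₂ xor hx h3Nbd
  replace hx := congrArg₂ xor hx h3SUW
  replace hx := congrArg₂ xor hx h6HVd
  replace hx := congrArg₂ xor hx h6KSa
  replace hx := congrArg₂ xor hx h8FVb
  replace hx := congrArg₂ xor hx h8GUa
  clear h ht h12NW h15HK h25FG h3Nbd h3SUW h6HVd h6KSa h8FVb h8GUa
  revert hx
  generalize f v1 = x1
  generalize f v2 = x2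
  generalize f v3 = x3
  generalize f v5 = x5
  generalize f v6 = x6
  generalize f v8 = x8
  generalize f vF = xF
  generalize f vG = xG
  generalize f vH = xH
  generalize f vK = xK
  generalize f vN = xN
  generalize f vS = xS
  generalize f vU = xU
  generalize f vV = xV
  generalize f vW = xW
  generalize f va = xa
  generalize f vb = xb
  generalize f vd = xd
  intro hx
  simp [Bool.xor_assoc, Bool.xor_comm, Bool.xor_left_comm] at hx
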